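/- Let X be a totally disconnected compact metrizable space, σ : X → X a surjective local homeomorphism, and {P_n}_{n≥0} a σ-refined sequence of partitions of X. Let j ≥ 0, Z₁ ∈ P_{2j} and Z ∈ P_{2j+1} with Z ⊆ σ(Z₁). Then every Z'' ∈ P_{2j+2} is either contained in or disjoint from σ⁻¹(Z) ∩ Z₁, so σ⁻¹(Z) ∩ Z₁ is the disjoint union of those Z'' ∈ P_{2j+2} contained in it; moreover Z is the disjoint union of the sets σ(Z'') over those Z'' ∈ P_{2j+2} with Z'' ⊆ σ⁻¹(Z) ∩ Z₁. -/

import Mathlib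

open Set

section Prelim

variable {X : Type*}

/-- A (finite clopen) partition of the space `X`: a finite family of nonempty, pairwise
disjoint clopen subsets of `X` whose union is `X`. -/
def IsClopenPartition [TopologicalSpace X] (P : Set (Set X)) : Prop :=
  P.Finite ∧ (∀ Z ∈ P, Z.Nonempty) ∧ (∀ Z ∈ P, IsClopen Z) ∧
    P.PairwiseDisjoint id ∧ ⋃₀ P = Set.univ

/-- The cardinality of the fiber `σ⁻¹({x})`. -/
noncomputable def fiberCard (σ : X → X) (x : X) : ℕ :=
  (σ ⁻¹' {x}).ncard

/-- `U_{≥ k}`: the set of points with at least `k` preimages. -/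
def fiberGE (σ : X → X) (k : ℕ) : Set X :=
  {x : X | k ≤ fiberCard σ x}

/-- `N(σ) = sup_{x ∈ X} |σ⁻¹({x})|`. -/
noncomputable def Nsigma (σ : X → X) : ℕ :=
  sSup (Set.range (fiberCard σ))

/-- The partition `P^σ`, whose members are the nonempty sets of the form
`σ(Z₁) ∩ ⋯ ∩ σ(Z_k) \ U_{≥ k+1}` for pairwise distinct `Z₁, …, Z_k ∈ P` and
`1 ≤ k ≤ N(σ)`. -/
noncomputable def sigmaPart (σ : X → X) (P : Set (Set X)) : Set (Set X) :=
  {T | ∃ k : ℕ, 1 ≤ k ∧ k ≤ Nsigma σ ∧ ∃ Z : Fin k → Set X,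
      (∀ j, Z j ∈ P) ∧ Function.Injective Z ∧
      T = (⋂ j, σ '' Z j) \ fiberGE σ (k + 1) ∧ T.Nonempty}

/-- The partition `σ⁻¹(P) = {σ⁻¹(Z) : Z ∈ P}`. -/
def preimagePart (σ : X → X) (P : Set (Set X)) : Set (Set X) :=
  (fun Z => σ ⁻¹' Z) '' P

/-- `P₁ ≼ P₂`: `P₂` is finer than `P₁`, i.e. every member of `P₂` is contained in a
member of `P₁`. -/
def Finer (P₁ P₂ : Set (Set X)) : Prop :=
  ∀ Z ∈ P₂, ∃ Z' ∈ P₁, Z ⊆ Z'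

/-- The wedge `P₁ ∨ P₂ = {Z₁ ∩ Z₂ ≠ ∅ : Z₁ ∈ P₁, Z₂ ∈ P₂}`. -/
def wedgePart (P₁ P₂ : Set (Set X)) : Set (Set X) :=
  {T | ∃ Z₁ ∈ P₁, ∃ Z₂ ∈ P₂, T = Z₁ ∩ Z₂ ∧ T.Nonempty}

/-- A σ-refined sequence of partitions, with respect to a fixed distance function `d`
inducing the topology:  (a) `σ` is injective on each member of `P 0`; (b) each `P (n+1)`
refines `P n`; (c) `⋃ n, P n` generates the topology of `X`; (d) the diameters of the
members of `P n` tend to `0`; (e) `P (2j) ∨ P (2j)^σ ≼ P (2j+1)` and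
`P (2j+1) ∨ σ⁻¹(P (2j+1)) ≼ P (2j+2)`. -/
noncomputable def IsSigmaRefinedSeq [t : TopologicalSpace X] (d : X → X → ℝ) (σ : X → X)
    (P : ℕ → Set (Set X)) : Prop :=
  (∀ n, IsClopenPartition (P n)) ∧
  (∀ Z ∈ P 0, Set.InjOn σ Z) ∧
  (∀ n, Finer (P n) (P (n + 1))) ∧
  t = TopologicalSpace.generateFrom (⋃ n, P n) ∧
  (∀ ε : ℝ, 0 < ε → ∃ N : ℕ, ∀ n, N ≤ n → ∀ Z ∈ P n, ∀ x ∈ Z, ∀ y ∈ Z, d x y < ε) ∧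
  (∀ j : ℕ, Finer (wedgePart (P (2 * j)) (sigmaPart σ (P (2 * j)))) (P (2 * j + 1))) ∧
  (∀ j : ℕ, Finer (wedgePart (P (2 * j + 1)) (preimagePart σ (P (2 * j + 1))))
      (P (2 * j + 2)))

end Prelim

/-!
If `P ≼ Q` and `Q ∨ σ⁻¹(Q) ≼ R`, then `R` refines both `P` and `σ⁻¹(Q)`, so a member of `R` cannot
straddle the boundary of `Z₁ ∈ P` or of `σ⁻¹(Z)` with `Z ∈ Q`. Hence `R` cuts `σ⁻¹(Z) ∩ Z₁` into
whole members, and since `σ` maps this set bijectively onto `Z`, their images cut up `Z`.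
-/

section Families

variable {X : Type*} {σ : X → X} {P Q R : Set (Set X)} {A B : Set X}

lemma Finer.trans (hPQ : Finer P Q) (hQR : Finer Q R) : Finer P R := fun W hW ↦
  let ⟨B, hB, hWB⟩ := hQR W hW
  let ⟨A, hA, hBA⟩ := hPQ B hB
  ⟨A, hA, hWB.trans hBA⟩

lemma finer_wedgePart_left (P Q : Set (Set X)) : Finer P (wedgePart P Q) := by
  rintro _ ⟨A, hA, B, -, rfl, -⟩
  exact ⟨A, hA, inter_subset_left⟩

lemma finer_wedgePart_right (P Q : Set (Set X)) : Finer Q (wedgePart P Q) := by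
  rintro _ ⟨A, -, B, hB, rfl, -⟩
  exact ⟨B, hB, inter_subset_right⟩

lemma pairwiseDisjoint_preimagePart (hQ : Q.PairwiseDisjoint id) :
    (preimagePart σ Q).PairwiseDisjoint id := by
  rintro _ ⟨A, hA, rfl⟩ _ ⟨B, hB, rfl⟩ hne
  exact (hQ hA hB fun h ↦ hne (congrArg (σ ⁻¹' ·) h)).preimage σ

/-- The family `R` resolves the set `A` if no member of `R` straddles the boundary of `A`: each is
contained in `A` or disjoint from it. For a partition `R` this says that `A` is a union of members
of `R`. -/
def Resolves (R : Set (Set X)) (A : Set X) : Prop :=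
  ∀ W ∈ R, W ⊆ A ∨ Disjoint W A

lemma Finer.resolves (hPR : Finer P R) (hP : P.PairwiseDisjoint id) (hA : A ∈ P) :
    Resolves R A := by
  intro W hW
  obtain ⟨B, hB, hWB⟩ := hPR W hW
  obtain rfl | hne := eq_or_ne B A
  · exact .inl hWB
  · exact .inr ((hP hB hA hne).mono_left hWB)

lemma Resolves.inter (hA : Resolves R A) (hB : Resolves R B) : Resolves R (A ∩ B) := by
  intro W hW
  obtain hWA | hWA := hA W hW
  · obtain hWB | hWB := hB W hW
    · exact .inl (subset_inter hWA hWB)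
    · exact .inr (hWB.mono_right inter_subset_right)
  · exact .inr (hWA.mono_right inter_subset_left)

lemma Resolves.eq_sUnion (hA : Resolves R A) (hR : ⋃₀ R = univ) :
    A = ⋃₀ {W | W ∈ R ∧ W ⊆ A} := by
  refine Subset.antisymm (fun x hx ↦ ?_) (sUnion_subset fun _ hW ↦ hW.2)
  obtain ⟨W, hW, hxW⟩ := sUnion_eq_univ_iff.mp hR x
  exact ⟨W, ⟨hW, (hA W hW).resolve_right (not_disjoint_iff.mpr ⟨x, hxW, hx⟩)⟩, hxW⟩

lemma resolves_preimage_inter {Z₁ Z : Set X} (hP : P.PairwiseDisjoint id)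
    (hQ : Q.PairwiseDisjoint id) (hPQ : Finer P Q)
    (hQR : Finer (wedgePart Q (preimagePart σ Q)) R) (hZ₁ : Z₁ ∈ P) (hZ : Z ∈ Q) :
    Resolves R (σ ⁻¹' Z ∩ Z₁) := by
  have hpre : Finer (preimagePart σ Q) R := (finer_wedgePart_right _ _).trans hQR
  have hPR : Finer P R := hPQ.trans ((finer_wedgePart_left _ _).trans hQR)
  exact (hpre.resolves (pairwiseDisjoint_preimagePart hQ) (mem_image_of_mem _ hZ)).inter
    (hPR.resolves hP hZ₁)

theorem stmt12_general {Z₁ Z : Set X} (hP : P.PairwiseDisjoint id) (hQ : Q.PairwiseDisjoint id)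
    (hR : R.PairwiseDisjoint id) (hcover : ⋃₀ R = univ) (hPQ : Finer P Q)
    (hQR : Finer (wedgePart Q (preimagePart σ Q)) R) (hZ₁ : Z₁ ∈ P) (hZ : Z ∈ Q)
    (hinj : InjOn σ Z₁) (hsub : Z ⊆ σ '' Z₁) :
    (∀ W ∈ R, W ⊆ σ ⁻¹' Z ∩ Z₁ ∨ Disjoint W (σ ⁻¹' Z ∩ Z₁)) ∧
      σ ⁻¹' Z ∩ Z₁ = ⋃₀ {W | W ∈ R ∧ W ⊆ σ ⁻¹' Z ∩ Z₁} ∧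
      Z = (⋃ W ∈ {W | W ∈ R ∧ W ⊆ σ ⁻¹' Z ∩ Z₁}, σ '' W) ∧
      ∀ W₁ ∈ {W | W ∈ R ∧ W ⊆ σ ⁻¹' Z ∩ Z₁}, ∀ W₂ ∈ {W | W ∈ R ∧ W ⊆ σ ⁻¹' Z ∩ Z₁},
        W₁ ≠ W₂ → Disjoint (σ '' W₁) (σ '' W₂) := by
  have hres : Resolves R (σ ⁻¹' Z ∩ Z₁) := resolves_preimage_inter hP hQ hPQ hQR hZ₁ hZ
  have hunion := hres.eq_sUnion hcover
  refine ⟨hres, hunion, ?_, fun W₁ hW₁ W₂ hW₂ hne ↦ ?_⟩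
  · calc
      Z = σ '' (σ ⁻¹' Z ∩ Z₁) := by rw [image_preimage_inter, inter_eq_left.mpr hsub]
      _ = σ '' ⋃₀ {W | W ∈ R ∧ W ⊆ σ ⁻¹' Z ∩ Z₁} := congrArg (σ '' ·) hunion
      _ = ⋃ W ∈ {W | W ∈ R ∧ W ⊆ σ ⁻¹' Z ∩ Z₁}, σ '' W := by
        rw [sUnion_eq_biUnion, image_iUnion₂]
  · exact (hR hW₁.1 hW₂.1 hne).image hinj (hW₁.2.trans inter_subset_right)
      (hW₂.2.trans inter_subset_right)

end Families

namespace IsSigmaRefinedSeq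

variable {X : Type*} [TopologicalSpace X] {d : X → X → ℝ} {σ : X → X} {P : ℕ → Set (Set X)}

lemma pairwiseDisjoint (hP : IsSigmaRefinedSeq d σ P) (n : ℕ) : (P n).PairwiseDisjoint id :=
  (hP.1 n).2.2.2.1

lemma sUnion_eq_univ (hP : IsSigmaRefinedSeq d σ P) (n : ℕ) : ⋃₀ P n = univ :=
  (hP.1 n).2.2.2.2

lemma finer_succ (hP : IsSigmaRefinedSeq d σ P) (n : ℕ) : Finer (P n) (P (n + 1)) :=
  hP.2.2.1 n

lemma finer_wedgePart_preimagePart (hP : IsSigmaRefinedSeq d σ P) (j : ℕ) :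
    Finer (wedgePart (P (2 * j + 1)) (preimagePart σ (P (2 * j + 1)))) (P (2 * j + 2)) :=
  hP.2.2.2.2.2.2 j

lemma injOn (hP : IsSigmaRefinedSeq d σ P) (n : ℕ) {W : Set X} (hW : W ∈ P n) : InjOn σ W := by
  induction n generalizing W with
  | zero => exact hP.2.1 W hW
  | succ n ih =>
    obtain ⟨W', hW', hWW'⟩ := hP.finer_succ n W hW
    exact (ih hW').mono hWW'

end IsSigmaRefinedSeq

/-- Lemma (group of `f`'s), part (i): with `Z₁ ∈ P (2j)`, `Z ∈ P (2j+1)` and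
`Z ⊆ σ(Z₁)`, every member of `P (2j+2)` is contained in or disjoint from
`σ⁻¹(Z) ∩ Z₁`; moreover `σ⁻¹(Z) ∩ Z₁` is the (disjoint) union of the members of
`P (2j+2)` contained in it, and `Z` is the disjoint union of their images under `σ`. -/
theorem stmt12 {X : Type*} [MetricSpace X] [CompactSpace X] [TotallyDisconnectedSpace X]
    (σ : X → X) (hσ : IsLocalHomeomorph σ) (hsurj : Function.Surjective σ)
    (P : ℕ → Set (Set X)) (hP : IsSigmaRefinedSeq dist σ P)
    (j : ℕ) (Z₁ Z : Set X) (hZ₁ : Z₁ ∈ P (2 * j)) (hZ : Z ∈ P (2 * j + 1))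
    (hsub : Z ⊆ σ '' Z₁) :
    (∀ Z'' ∈ P (2 * j + 2), Z'' ⊆ σ ⁻¹' Z ∩ Z₁ ∨ Disjoint Z'' (σ ⁻¹' Z ∩ Z₁)) ∧
      σ ⁻¹' Z ∩ Z₁ = ⋃₀ {W | W ∈ P (2 * j + 2) ∧ W ⊆ σ ⁻¹' Z ∩ Z₁} ∧
      Z = (⋃ W ∈ {W | W ∈ P (2 * j + 2) ∧ W ⊆ σ ⁻¹' Z ∩ Z₁}, σ '' W) ∧
      ∀ W₁ ∈ {W | W ∈ P (2 * j + 2) ∧ W ⊆ σ ⁻¹' Z ∩ Z₁},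
        ∀ W₂ ∈ {W | W ∈ P (2 * j + 2) ∧ W ⊆ σ ⁻¹' Z ∩ Z₁},
          W₁ ≠ W₂ → Disjoint (σ '' W₁) (σ '' W₂) :=
  stmt12_general (hP.pairwiseDisjoint _) (hP.pairwiseDisjoint _) (hP.pairwiseDisjoint _)
    (hP.sUnion_eq_univ _) (hP.finer_succ _) (hP.finer_wedgePart_preimagePart j) hZ₁ hZ
    (hP.injOn _ hZ₁) hsub
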